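/- For every integer d ≥ 3 and every real number d̂ > 2 there exists ε > 0 such that the following holds: the proportion of perfect matchings M of the set {1,…,N}×{1,…,d} for which there exists a nonempty subset U ⊆ {1,…,N} with |U| ≤ ε·N such that the number of matched pairs of M both of whose elements have first coordinate in U is at least (d̂/2)·|U|, tends to 0 as N → ∞ along integers N with N·d even. -/

import Mathlib

/-- `P` is a perfect matching of `α`: a set of non-diagonal unordered pairs such that
every element of `α` belongs to exactly one pair. -/
def IsPerfectMatching {α : Type*} (P : Set (Sym2 α)) : Prop :=
  (∀ e ∈ P, ¬ e.IsDiag) ∧ ∀ x : α, ∃! e, e ∈ P ∧ x ∈ e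

/-- The number of pairs of the matching `P` both of whose elements have first
coordinate in `U`. -/
noncomputable def pairsIn {α β : Type*} (P : Set (Sym2 (α × β))) (U : Set α) : ℕ :=
  {e ∈ P | ∀ x ∈ e, x.1 ∈ U}.ncard

/-!
A first-moment argument. If `D` points remain outside `k` prescribed pairs, then a uniformly random
perfect matching contains all these pairs with probability at most `D⁻ᵏ`, because exchanging the
partner of a point does not change the probability. A set `U` of size `u` spans at most `(ud)²`
candidate pairs, so with `D = N` and `k ≥ (1 + a)u`, where `a = d̂/2 - 1 > 0`, the probability that
some `U` of size `u` spans `k` pairs of the matching is at most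
`N.choose u * ((ud)²).choose k / Nᵏ ≤ (C (u/N)ᵃ)ᵘ`. If `ε` is so small that `C εᵃ < 1`, then the sum
of these bounds over `1 ≤ u ≤ εN` is dominated by a geometric series and tends to `0` term by term.
-/

open Finset Filter Topology

/-! ### Uniformly random perfect matchings -/

/-- The probability that a uniformly random perfect matching of `α` belongs to `A`. It is `0` for
every `A` if the perfect matchings of `α` are infinitely many or do not exist. -/
noncomputable def matchingProb {α : Type*} (A : Set (Set (Sym2 α))) : ℝ :=
  {P | IsPerfectMatching P ∧ P ∈ A}.ncard / {P : Set (Sym2 α) | IsPerfectMatching P}.ncard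

section MatchingProb

variable {α : Type*}

theorem IsPerfectMatching.eq_of_mem {P : Set (Sym2 α)} (hP : IsPerfectMatching P) {x : α}
    {e f : Sym2 α} (he : e ∈ P) (hf : f ∈ P) (hxe : x ∈ e) (hxf : x ∈ f) : e = f :=
  (hP.2 x).unique ⟨he, hxe⟩ ⟨hf, hxf⟩

theorem IsPerfectMatching.image_map {β : Type*} {P : Set (Sym2 α)} (hP : IsPerfectMatching P)
    (σ : α ≃ β) : IsPerfectMatching (Sym2.map σ '' P) := by
  refine ⟨?_, fun x => ?_⟩
  · rintro _ ⟨e, he, rfl⟩ hdiag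
    exact hP.1 e he ((Sym2.isDiag_map σ.injective).1 hdiag)
  · obtain ⟨e, ⟨he, hxe⟩, -⟩ := hP.2 (σ.symm x)
    refine ⟨Sym2.map σ e, ⟨⟨e, he, rfl⟩, Sym2.mem_map.2 ⟨_, hxe, σ.apply_symm_apply x⟩⟩, ?_⟩
    rintro _ ⟨⟨f, hf, rfl⟩, hxf⟩
    obtain ⟨y, hyf, rfl⟩ := Sym2.mem_map.1 hxf
    rw [σ.symm_apply_apply] at hxe
    rw [hP.eq_of_mem he hf hxe hyf]

theorem matchingProb_nonneg (A : Set (Set (Sym2 α))) : 0 ≤ matchingProb A := by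
  unfold matchingProb
  positivity

theorem matchingProb_le_one [Finite α] (A : Set (Set (Sym2 α))) : matchingProb A ≤ 1 :=
  div_le_one_of_le₀ (mod_cast Set.ncard_le_ncard fun _ hP => hP.1) (Nat.cast_nonneg _)

theorem exists_isPerfectMatching_of_matchingProb_ne_zero {A : Set (Set (Sym2 α))}
    (hA : matchingProb A ≠ 0) : ∃ P ∈ A, IsPerfectMatching P := by
  contrapose! hA
  have hempty : {P | IsPerfectMatching P ∧ P ∈ A} = ∅ :=
    Set.eq_empty_of_forall_notMem fun P hP => hA P hP.2 hP.1
  rw [matchingProb, hempty, Set.ncard_empty, Nat.cast_zero, zero_div]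

theorem matchingProb_mono [Finite α] {A B : Set (Set (Sym2 α))} (hAB : A ⊆ B) :
    matchingProb A ≤ matchingProb B := by
  unfold matchingProb
  gcongr
  exact Set.toFinite _

theorem matchingProb_biUnion_le [Finite α] {ι : Type*} (I : Finset ι)
    (A : ι → Set (Set (Sym2 α))) :
    matchingProb (⋃ i ∈ I, A i) ≤ ∑ i ∈ I, matchingProb (A i) := by
  unfold matchingProb
  rw [← Finset.sum_div]
  gcongr
  have hsub : {P | IsPerfectMatching P ∧ P ∈ ⋃ i ∈ I, A i} ⊆
      ⋃ i ∈ I, {P | IsPerfectMatching P ∧ P ∈ A i} := by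
    rintro P ⟨hP, hPA⟩
    simpa [hP] using hPA
  exact_mod_cast (Set.ncard_le_ncard hsub).trans (Finset.set_ncard_biUnion_le _ _)

theorem matchingProb_le_matchingProb_preimage_map [Finite α] (σ : Equiv.Perm α)
    (A : Set (Set (Sym2 α))) :
    matchingProb {P | Sym2.map σ '' P ∈ A} ≤ matchingProb A := by
  have hcard : {P | IsPerfectMatching P ∧ Sym2.map σ '' P ∈ A}.ncard ≤
      {P | IsPerfectMatching P ∧ P ∈ A}.ncard :=
    Set.ncard_le_ncard_of_injOn (Set.image (Sym2.map σ))
      (fun P hP => ⟨hP.1.image_map σ, hP.2⟩)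
      (Set.image_injective.2 (Sym2.map.injective σ.injective)).injOn
  exact div_le_div_of_nonneg_right (mod_cast hcard) (Nat.cast_nonneg _)

theorem matchingProb_insert_le_of_exchange [Finite α] {F : Set (Sym2 α)} {x y z : α}
    (hyx : y ≠ x) (hzx : z ≠ x) (hyF : ∀ e ∈ F, y ∉ e) (hzF : ∀ e ∈ F, z ∉ e) :
    matchingProb {P | insert s(x, y) F ⊆ P} ≤ matchingProb {P | insert s(x, z) F ⊆ P} := by
  classical
  have hswap_fix : ∀ e ∈ F, Sym2.map (Equiv.swap y z) e = e := fun e he => by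
    have hfix : ∀ w ∈ e, Equiv.swap y z w = id w := fun w hw =>
      Equiv.swap_apply_of_ne_of_ne (by rintro rfl; exact hyF e he hw)
        (by rintro rfl; exact hzF e he hw)
    rw [Sym2.map_congr hfix, Sym2.map_id, id]
  refine (matchingProb_mono fun P hP => ?_).trans
    (matchingProb_le_matchingProb_preimage_map (Equiv.swap y z) _)
  refine Set.insert_subset ⟨s(x, y), hP (Set.mem_insert _ _), ?_⟩ fun e he =>
    ⟨e, hP (Set.mem_insert_of_mem _ he), hswap_fix e he⟩
  simp [Equiv.swap_apply_of_ne_of_ne hyx.symm hzx.symm]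

theorem sum_matchingProb_insert_le [Finite α] (F : Set (Sym2 α)) (x : α) (Z : Finset α) :
    ∑ z ∈ Z, matchingProb {P | insert s(x, z) F ⊆ P} ≤ matchingProb {P | F ⊆ P} := by
  let M : α → Set (Set (Sym2 α)) := fun z => {P | IsPerfectMatching P ∧ insert s(x, z) F ⊆ P}
  have hdisj : (Z : Set α).PairwiseDisjoint M := by
    refine fun z _ w _ hzw => Set.disjoint_left.2 fun P hPz hPw => hzw ?_
    exact Sym2.congr_right.1 <| hPz.1.eq_of_mem (hPz.2 (Set.mem_insert _ _))
      (hPw.2 (Set.mem_insert _ _)) (Sym2.mem_mk_left x z) (Sym2.mem_mk_left x w)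
  have hsub : ⋃ z ∈ Z, M z ⊆ {P | IsPerfectMatching P ∧ F ⊆ P} :=
    Set.iUnion₂_subset fun z _ P hP => ⟨hP.1, (Set.subset_insert _ _).trans hP.2⟩
  have hcard : ∑ z ∈ Z, (M z).ncard ≤ {P | IsPerfectMatching P ∧ F ⊆ P}.ncard := by
    rw [← finsum_mem_coe_finset, ← Z.finite_toSet.ncard_biUnion (fun _ _ => Set.toFinite _) hdisj]
    exact Set.ncard_le_ncard hsub
  unfold matchingProb
  rw [← Finset.sum_div]
  gcongr
  exact_mod_cast hcard

theorem card_biUnion_toFinset_le [DecidableEq α] (F : Finset (Sym2 α)) :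
    #(F.biUnion Sym2.toFinset) ≤ 2 * #F := by
  rw [mul_comm]
  refine Finset.card_biUnion_le_card_mul _ _ _ fun e _ => ?_
  rw [Sym2.card_toFinset]
  split_ifs <;> simp

theorem matchingProb_insert_mul_le [Fintype α] {D : ℕ} {F : Finset (Sym2 α)} {e : Sym2 α}
    (he : e ∉ F) (hD : D + 2 * #F < Fintype.card α) :
    matchingProb {P | insert e (F : Set (Sym2 α)) ⊆ P} * D ≤
      matchingProb {P | (F : Set (Sym2 α)) ⊆ P} := by
  classical
  rcases eq_or_ne (matchingProb {P | insert e (F : Set (Sym2 α)) ⊆ P}) 0 with hzero | hne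
  · rw [hzero, zero_mul]
    exact matchingProb_nonneg _
  obtain ⟨P, heFP, hP⟩ := exists_isPerfectMatching_of_matchingProb_ne_zero hne
  have heP : e ∈ P := heFP (Set.mem_insert _ _)
  have he_disj : ∀ f ∈ F, ∀ w ∈ e, w ∉ f := fun f hf w hwe hwf =>
    he (hP.eq_of_mem heP (heFP (Set.mem_insert_of_mem _ hf)) hwe hwf ▸ hf)
  induction e using Sym2.ind with | _ x y =>
  have hyx : y ≠ x := fun h => hP.1 _ heP (by simp [h])
  let Z : Finset α := (insert x (F.biUnion Sym2.toFinset))ᶜ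
  have hDZ : D ≤ #Z := by
    have := card_biUnion_toFinset_le F
    have := Finset.card_insert_le x (F.biUnion Sym2.toFinset)
    rw [Finset.card_compl]
    omega
  have hexchange : ∀ z ∈ Z, matchingProb {P | insert s(x, y) (F : Set (Sym2 α)) ⊆ P} ≤
      matchingProb {P | insert s(x, z) (F : Set (Sym2 α)) ⊆ P} := fun z hz => by
    simp only [Z, Finset.mem_compl, Finset.mem_insert, Finset.mem_biUnion, Sym2.mem_toFinset,
      not_or, not_exists, not_and] at hz
    exact matchingProb_insert_le_of_exchange hyx hz.1
      (fun f hf => he_disj f hf y (Sym2.mem_mk_right x y)) hz.2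
  calc matchingProb {P | insert s(x, y) (F : Set (Sym2 α)) ⊆ P} * D
      ≤ #Z • matchingProb {P | insert s(x, y) (F : Set (Sym2 α)) ⊆ P} := by
        rw [nsmul_eq_mul, mul_comm]
        gcongr
        exact matchingProb_nonneg _
    _ ≤ ∑ z ∈ Z, matchingProb {P | insert s(x, z) (F : Set (Sym2 α)) ⊆ P} :=
        Finset.card_nsmul_le_sum _ _ _ hexchange
    _ ≤ matchingProb {P | (F : Set (Sym2 α)) ⊆ P} := sum_matchingProb_insert_le _ x Z

theorem matchingProb_superset_mul_pow_le_one [Fintype α] {D : ℕ} {F : Finset (Sym2 α)}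
    (hD : D + 2 * #F ≤ Fintype.card α) :
    matchingProb {P | (F : Set (Sym2 α)) ⊆ P} * D ^ #F ≤ 1 := by
  classical
  induction F using Finset.induction_on with
  | empty => simpa using matchingProb_le_one _
  | insert e F he ih =>
    rw [Finset.card_insert_of_notMem he] at hD ⊢
    rw [Finset.coe_insert, pow_succ', ← mul_assoc]
    calc matchingProb {P | insert e (F : Set (Sym2 α)) ⊆ P} * D * D ^ #F
        ≤ matchingProb {P | (F : Set (Sym2 α)) ⊆ P} * D ^ #F := by
          gcongr
          exact matchingProb_insert_mul_le he (by omega)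
      _ ≤ 1 := ih (by omega)

theorem matchingProb_le_ncard_inter_mul_pow_le [Fintype α] {D k : ℕ} (T : Finset (Sym2 α))
    (hD : D + 2 * k ≤ Fintype.card α) :
    matchingProb {P | k ≤ (P ∩ (T : Set (Sym2 α))).ncard} * D ^ k ≤ (#T).choose k := by
  have hsub : {P : Set (Sym2 α) | k ≤ (P ∩ (T : Set (Sym2 α))).ncard} ⊆
      ⋃ F ∈ T.powersetCard k, {P | (F : Set (Sym2 α)) ⊆ P} := by
    intro P hP
    obtain ⟨F, hF, hFk⟩ := Set.exists_subset_card_eq hP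
    lift F to Finset (Sym2 α) using Set.toFinite F
    rw [Set.ncard_coe_finset] at hFk
    obtain ⟨hFP, hFT⟩ := Set.subset_inter_iff.1 hF
    exact Set.mem_biUnion (Finset.mem_powersetCard.2 ⟨mod_cast hFT, hFk⟩) hFP
  calc matchingProb {P | k ≤ (P ∩ (T : Set (Sym2 α))).ncard} * D ^ k
      ≤ (∑ F ∈ T.powersetCard k, matchingProb {P | (F : Set (Sym2 α)) ⊆ P}) * D ^ k := by
        gcongr
        exact (matchingProb_mono hsub).trans (matchingProb_biUnion_le _ _)
    _ = ∑ F ∈ T.powersetCard k, matchingProb {P | (F : Set (Sym2 α)) ⊆ P} * D ^ k :=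
        Finset.sum_mul _ _ _
    _ ≤ #(T.powersetCard k) • (1 : ℝ) := Finset.sum_le_card_nsmul _ _ _ fun F hF => by
        obtain ⟨-, rfl⟩ := Finset.mem_powersetCard.1 hF
        exact matchingProb_superset_mul_pow_le_one hD
    _ = (#T).choose k := by rw [Finset.card_powersetCard, nsmul_one]

end MatchingProb

/-! ### The union bound over sets of a given size -/

section PairsIn

variable {V β : Type*} [Fintype β]

theorem pairsIn_eq_ncard_inter_sym2 (P : Set (Sym2 (V × β))) (U : Finset V) :
    pairsIn P U = (P ∩ ((U ×ˢ univ).sym2 : Finset (Sym2 (V × β)))).ncard := by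
  have hmem (e : Sym2 (V × β)) : e ∈ (U ×ˢ univ).sym2 ↔ ∀ x ∈ e, x.1 ∈ (U : Set V) := by
    simp [Finset.mem_sym2_iff]
  simp only [pairsIn, ← hmem]
  rfl

theorem card_sym2_le_sq {α : Type*} (s : Finset α) : #s.sym2 ≤ #s ^ 2 := by
  classical
  rw [Finset.sym2_eq_image, sq, ← Finset.card_product]
  exact Finset.card_image_le

theorem matchingProb_exists_card_eq_mul_pow_le [Fintype V] {D u k : ℕ}
    (hD : D + 2 * k ≤ Fintype.card V * Fintype.card β) :
    matchingProb {P : Set (Sym2 (V × β)) |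
        ∃ U : Finset V, #U = u ∧ k ≤ pairsIn P (U : Set V)} * D ^ k ≤
      (Fintype.card V).choose u * ((u * Fintype.card β) ^ 2).choose k := by
  have hsub : {P : Set (Sym2 (V × β)) | ∃ U : Finset V, #U = u ∧ k ≤ pairsIn P (U : Set V)} ⊆
      ⋃ U ∈ (univ : Finset V).powersetCard u, {P | k ≤ pairsIn P (U : Set V)} := by
    rintro P ⟨U, hU, hPU⟩
    exact Set.mem_biUnion (Finset.mem_powersetCard.2 ⟨subset_univ U, hU⟩) hPU
  have hfixed : ∀ U ∈ (univ : Finset V).powersetCard u,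
      matchingProb {P : Set (Sym2 (V × β)) | k ≤ pairsIn P (U : Set V)} * D ^ k ≤
        ((u * Fintype.card β) ^ 2).choose k := fun U hU => by
    obtain ⟨-, rfl⟩ := Finset.mem_powersetCard.1 hU
    simp only [pairsIn_eq_ncard_inter_sym2]
    refine (matchingProb_le_ncard_inter_mul_pow_le _ (by rwa [Fintype.card_prod])).trans ?_
    have := card_sym2_le_sq (U ×ˢ (univ : Finset β))
    rw [Finset.card_product, Finset.card_univ] at this
    exact_mod_cast Nat.choose_le_choose k this
  calc matchingProb {P : Set (Sym2 (V × β)) |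
          ∃ U : Finset V, #U = u ∧ k ≤ pairsIn P (U : Set V)} * D ^ k
      ≤ (∑ U ∈ (univ : Finset V).powersetCard u,
          matchingProb {P : Set (Sym2 (V × β)) | k ≤ pairsIn P (U : Set V)}) * D ^ k := by
        gcongr
        exact (matchingProb_mono hsub).trans (matchingProb_biUnion_le _ _)
    _ = ∑ U ∈ (univ : Finset V).powersetCard u,
          matchingProb {P : Set (Sym2 (V × β)) | k ≤ pairsIn P (U : Set V)} * D ^ k :=
        Finset.sum_mul _ _ _
    _ ≤ #(univ.powersetCard u : Finset (Finset V)) •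
          (((u * Fintype.card β) ^ 2).choose k : ℝ) := Finset.sum_le_card_nsmul _ _ _ hfixed
    _ = _ := by rw [Finset.card_powersetCard, Finset.card_univ, nsmul_eq_mul]

end PairsIn

/-! ### Binomial estimates and the limit of the union bound -/

theorem choose_le_exp_one_mul_div_pow (n k : ℕ) :
    (n.choose k : ℝ) ≤ (Real.exp 1 * n / k) ^ k := by
  rcases Nat.eq_zero_or_pos k with rfl | hk
  · simp
  have hfactorial : (k : ℝ) ^ k ≤ Real.exp 1 ^ k * k.factorial := by
    rw [← div_le_iff₀ (by positivity), ← Real.exp_nat_mul, mul_one]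
    exact Real.pow_div_factorial_le_exp _ (Nat.cast_nonneg k) k
  calc (n.choose k : ℝ) ≤ n ^ k / k.factorial := Nat.choose_le_pow_div k n
    _ ≤ (Real.exp 1 * n / k) ^ k := by
      rw [div_pow, mul_pow, div_le_div_iff₀ (by positivity) (by positivity)]
      calc (n : ℝ) ^ k * k ^ k ≤ n ^ k * (Real.exp 1 ^ k * k.factorial) := by gcongr
        _ = Real.exp 1 ^ k * n ^ k * k.factorial := by ring

theorem choose_mul_sq_le_pow {d u k : ℕ} (huk : u ≤ k) :
    (((u * d) ^ 2).choose k : ℝ) ≤ (Real.exp 1 * d ^ 2 * u) ^ k := by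
  refine (choose_le_exp_one_mul_div_pow _ _).trans ?_
  gcongr
  refine div_le_of_le_mul₀ (Nat.cast_nonneg k) (by positivity) ?_
  calc Real.exp 1 * ((u * d) ^ 2 : ℕ) = Real.exp 1 * d ^ 2 * u * u := by push_cast; ring
    _ ≤ Real.exp 1 * d ^ 2 * u * k := by gcongr

theorem choose_mul_choose_le_mul_pow {N d u k : ℕ} {a : ℝ} (ha : 0 ≤ a) (hN : 0 < N) (hu : 0 < u)
    (huN : Real.exp 1 * d ^ 2 * u ≤ N) (huk : (1 + a) * u ≤ k) :
    (N.choose u * ((u * d) ^ 2).choose k : ℝ) ≤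
      (Real.exp 1 * (Real.exp 1 * d ^ 2) ^ (1 + a) * (u / N : ℝ) ^ a) ^ u * N ^ k := by
  have huk' : u ≤ k := by
    have : (u : ℝ) ≤ (1 + a) * u := le_mul_of_one_le_left (Nat.cast_nonneg u) (by linarith)
    exact_mod_cast this.trans huk
  set B : ℝ := Real.exp 1 * d ^ 2
  have hB : 0 ≤ B := by positivity
  have hratio : (B * (u / N)) ^ k ≤ ((B * (u / N)) ^ (1 + a)) ^ u := by
    rw [← Real.rpow_mul_natCast (by positivity), ← Real.rpow_natCast _ k]
    refine Real.rpow_le_rpow_of_exponent_ge' (by positivity) ?_ (by positivity) huk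
    rwa [← mul_div_assoc, div_le_one (by positivity)]
  have hbase : Real.exp 1 * N / u * (B * (u / N)) ^ (1 + a) =
      Real.exp 1 * B ^ (1 + a) * (u / N : ℝ) ^ a := by
    rw [Real.mul_rpow hB (by positivity), Real.rpow_one_add' (x := (u / N : ℝ)) (by positivity)
      (by positivity)]
    field_simp
  calc (N.choose u * ((u * d) ^ 2).choose k : ℝ)
      ≤ (Real.exp 1 * N / u) ^ u * (B * u) ^ k := by
        gcongr
        exacts [choose_le_exp_one_mul_div_pow N u, choose_mul_sq_le_pow huk']
    _ = (Real.exp 1 * N / u) ^ u * (B * (u / N)) ^ k * N ^ k := by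
        rw [mul_assoc (_ ^ u), ← mul_pow, mul_assoc B, div_mul_cancel₀ _ (by positivity)]
    _ ≤ (Real.exp 1 * N / u) ^ u * ((B * (u / N)) ^ (1 + a)) ^ u * N ^ k := by gcongr
    _ = _ := by rw [← mul_pow, hbase]

theorem tendsto_sum_mul_div_rpow_pow {a C ε : ℝ} (ha : 0 < a) (hC : 0 ≤ C) (hε : 0 ≤ ε)
    (hCε : C * ε ^ a < 1) :
    Tendsto (fun N : ℕ => ∑ u ∈ Icc 1 ⌊ε * N⌋₊, (C * (u / N : ℝ) ^ a) ^ u) atTop (𝓝 0) := by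
  let f : ℕ → ℕ → ℝ := fun N =>
    (Icc 1 ⌊ε * N⌋₊ : Set ℕ).indicator fun u => (C * (u / N : ℝ) ^ a) ^ u
  have hf_nonneg (N u : ℕ) : 0 ≤ f N u := Set.indicator_nonneg (fun _ _ => by positivity) u
  have hf_le_geometric (N u : ℕ) : f N u ≤ (C * ε ^ a) ^ u := by
    refine Set.indicator_apply_le' (fun hu => ?_) fun _ => by positivity
    have huN : (u / N : ℝ) ≤ ε := div_le_of_le_mul₀ (Nat.cast_nonneg N) hε
      ((Nat.cast_le.2 (Finset.mem_Icc.1 hu).2).trans (Nat.floor_le (by positivity)))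
    gcongr
  have hf_tendsto (u : ℕ) : Tendsto (f · u) atTop (𝓝 0) := by
    rcases Nat.eq_zero_or_pos u with rfl | hu
    · simp [f]
    refine squeeze_zero (hf_nonneg · u)
      (fun N => Set.indicator_apply_le' (fun _ => le_rfl) fun _ => by positivity) ?_
    simpa [Real.zero_rpow ha.ne', hu.ne'] using
      (((tendsto_const_div_atTop_nhds_zero_nat (u : ℝ)).rpow_const
        (Or.inr ha.le)).const_mul C).pow u
  simpa only [f, ← Finset.coe_Icc, ← sum_eq_tsum_indicator, tsum_zero] using
    tendsto_tsum_of_dominated_convergence (summable_geometric_of_lt_one (by positivity) hCε)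
      hf_tendsto (Eventually.of_forall fun N u => by
        rw [Real.norm_of_nonneg (hf_nonneg N u)]; exact hf_le_geometric N u)

theorem exists_pos_mul_le_one_and_mul_rpow_lt_one {a : ℝ} (ha : 0 < a) (C K : ℝ) :
    ∃ ε : ℝ, 0 < ε ∧ K * ε ≤ 1 ∧ C * ε ^ a < 1 := by
  have hlin : Tendsto (fun ε : ℝ => K * ε) (𝓝[>] 0) (𝓝 0) :=
    (Continuous.tendsto' (by fun_prop) 0 0 (mul_zero K)).mono_left nhdsWithin_le_nhds
  have hpow : Tendsto (fun ε : ℝ => C * ε ^ a) (𝓝[>] 0) (𝓝 0) :=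
    (Continuous.tendsto' (continuous_const.mul (Real.continuous_rpow_const ha.le)) 0 0
      (by simp [ha.ne'])).mono_left nhdsWithin_le_nhds
  exact (eventually_mem_nhdsWithin.and ((hlin.eventually_le_const one_pos).and
    (hpow.eventually_lt_const one_pos))).exists

/-! ### Small dense sets -/

section Dense

variable {V β : Type*} [Fintype V] [Fintype β]

theorem matchingProb_exists_card_eq_dense_le {u : ℕ} {a : ℝ} (ha : 0 ≤ a)
    (hβ : 3 ≤ Fintype.card β) (hu : 0 < u) (huV : (2 + a) * u ≤ Fintype.card V)
    (huβ : Real.exp 1 * Fintype.card β ^ 2 * u ≤ Fintype.card V) :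
    matchingProb {P : Set (Sym2 (V × β)) |
        ∃ U : Finset V, #U = u ∧ (1 + a) * u ≤ pairsIn P (U : Set V)} ≤
      (Real.exp 1 * (Real.exp 1 * Fintype.card β ^ 2) ^ (1 + a) *
        (u / Fintype.card V : ℝ) ^ a) ^ u := by
  have hV : 0 < Fintype.card V := by
    have : (0 : ℝ) < (2 + a) * u := by positivity
    exact_mod_cast this.trans_le huV
  have hkV : ⌈(1 + a) * u⌉₊ ≤ Fintype.card V := by
    refine Nat.ceil_le.2 (le_trans ?_ huV)
    gcongr
    norm_num
  have hD : Fintype.card V + 2 * ⌈(1 + a) * u⌉₊ ≤ Fintype.card V * Fintype.card β := by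
    nlinarith
  have hunion := (matchingProb_exists_card_eq_mul_pow_le (u := u) hD).trans
    (choose_mul_choose_le_mul_pow ha hV hu huβ (Nat.le_ceil _))
  simpa only [Nat.ceil_le] using le_of_mul_le_mul_right hunion (by positivity)

theorem matchingProb_exists_card_le_dense_le {a ε : ℝ} (ha : 0 ≤ a) (hβ : 3 ≤ Fintype.card β)
    (hε : 0 ≤ ε) (hεa : (2 + a) * ε ≤ 1) (hεβ : Real.exp 1 * Fintype.card β ^ 2 * ε ≤ 1) :
    matchingProb {P : Set (Sym2 (V × β)) | ∃ U : Finset V, U.Nonempty ∧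
        (#U : ℝ) ≤ ε * Fintype.card V ∧ (1 + a) * #U ≤ pairsIn P (U : Set V)} ≤
      ∑ u ∈ Icc 1 ⌊ε * Fintype.card V⌋₊,
        (Real.exp 1 * (Real.exp 1 * Fintype.card β ^ 2) ^ (1 + a) *
          (u / Fintype.card V : ℝ) ^ a) ^ u := by
  have hsub : {P : Set (Sym2 (V × β)) | ∃ U : Finset V, U.Nonempty ∧
        (#U : ℝ) ≤ ε * Fintype.card V ∧ (1 + a) * #U ≤ pairsIn P (U : Set V)} ⊆
      ⋃ u ∈ Icc 1 ⌊ε * Fintype.card V⌋₊,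
        {P | ∃ U : Finset V, #U = u ∧ (1 + a) * u ≤ pairsIn P (U : Set V)} := by
    rintro P ⟨U, hU, hUε, hPU⟩
    exact Set.mem_biUnion (Finset.mem_Icc.2 ⟨hU.card_pos, Nat.le_floor hUε⟩) ⟨U, rfl, hPU⟩
  refine (matchingProb_mono hsub).trans ((matchingProb_biUnion_le _ _).trans
    (Finset.sum_le_sum fun u hu => ?_))
  obtain ⟨hu_pos, hu_floor⟩ := Finset.mem_Icc.1 hu
  have huε : (u : ℝ) ≤ ε * Fintype.card V :=
    (Nat.cast_le.2 hu_floor).trans (Nat.floor_le (by positivity))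
  have mul_le_card {K : ℝ} (hK : 0 ≤ K) (hKε : K * ε ≤ 1) : K * u ≤ Fintype.card V :=
    calc K * u ≤ K * (ε * Fintype.card V) := by gcongr
      _ = K * ε * Fintype.card V := by ring
      _ ≤ Fintype.card V := mul_le_of_le_one_left (Nat.cast_nonneg _) hKε
  exact matchingProb_exists_card_eq_dense_le ha hβ hu_pos (mul_le_card (by positivity) hεa)
    (mul_le_card (by positivity) hεβ)

end Dense

theorem stmt_8 (d : ℕ) (hd : 3 ≤ d) (dhat : ℝ) (hdhat : 2 < dhat) :
    ∃ ε : ℝ, 0 < ε ∧ ∀ δ : ℝ, 0 < δ → ∃ N₀ : ℕ, ∀ N : ℕ, N₀ ≤ N → Even (N * d) →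
      (Nat.card {P : Set (Sym2 (Fin N × Fin d)) // IsPerfectMatching P ∧
          ∃ U : Finset (Fin N), U.Nonempty ∧ (U.card : ℝ) ≤ ε * N ∧
            (dhat / 2) * U.card ≤ (pairsIn P ↑U : ℝ)} : ℝ) /
        (Nat.card {P : Set (Sym2 (Fin N × Fin d)) // IsPerfectMatching P} : ℝ) < δ := by
  obtain ⟨a, ha, hdhat_eq⟩ : ∃ a : ℝ, 0 < a ∧ dhat / 2 = 1 + a :=
    ⟨dhat / 2 - 1, by linarith, by ring⟩
  rw [hdhat_eq]
  set C : ℝ := Real.exp 1 * (Real.exp 1 * d ^ 2) ^ (1 + a)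
  obtain ⟨ε, hε, hKε, hCε⟩ := exists_pos_mul_le_one_and_mul_rpow_lt_one ha C
    (max (2 + a) (Real.exp 1 * d ^ 2))
  rw [max_mul_of_nonneg _ _ hε.le, max_le_iff] at hKε
  have hlim := tendsto_sum_mul_div_rpow_pow ha (by positivity) hε.le hCε
  refine ⟨ε, hε, fun δ hδ => ?_⟩
  obtain ⟨N₀, hN₀⟩ := eventually_atTop.1 (hlim.eventually_lt_const hδ)
  refine ⟨N₀, fun N hN _ => lt_of_le_of_lt ?_ (hN₀ N hN)⟩
  change matchingProb {P : Set (Sym2 (Fin N × Fin d)) | ∃ U : Finset (Fin N), U.Nonempty ∧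
    (#U : ℝ) ≤ ε * N ∧ (1 + a) * #U ≤ pairsIn P U} ≤ _
  simpa only [Fintype.card_fin] using matchingProb_exists_card_le_dense_le (V := Fin N)
    (β := Fin d) ha.le (by simpa using hd) hε.le hKε.1 (by simpa using hKε.2)
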